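/- Let N ≥ 1 and Q0 ≥ 1 be real numbers, and for q1 ∈ ℤ[i]\{0}, r1 ∈ ℤ[i], j ∈ ℤ[i] set S(q1,r1,j) := ∑_{q∈ℤ[i]} exp(−π N(q)/(2Q0)) · e(Re(j r1 q² / q1²)). Let K denote the maximum, over q1 ∈ ℤ[i] with Q0/√2 < N(q1) ≤ Q0 and reduced residues r1 mod q1² with (r1,q1)=1, of the number of pairs (q2, r2) with q2 ∈ ℤ[i], Q0/√2 < N(q2) ≤ Q0, r2 a reduced residue mod q2² with (r2,q2)=1, and N(r1 q2² − r2 q1²) ≤ 2 N^{−1} N(q1)² N(q2)². Then K ≤ C·( Q0³/N + (Q0²/N) · max_{Q0/√2 < N(q1) ≤ Q0, (r1,q1)=1} ∑_{j∈ℤ[i]\{0}} exp(−2π N(j) Q0²/N) · |S(q1,r1,j)| ) for an absolute constant C. -/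

import Mathlib

noncomputable section

/-- `e(t) = exp(2πit)`. -/
def e (t : ℝ) : ℂ := Complex.exp (2 * Real.pi * Complex.I * t)

/-- The norm of a Gaussian integer, as a real number. -/
def gN (z : GaussianInt) : ℝ := (z.re : ℝ) ^ 2 + (z.im : ℝ) ^ 2

/-- The smoothed quadratic Gauss-type sum
`S(q₁,r₁,j) = ∑_{q ∈ ℤ[i]} exp(-π N(q)/(2Q₀)) e(Re(j r₁ q²/q₁²))`. -/
def Ssum (Q0 : ℝ) (q1 r1 j : GaussianInt) : ℂ :=
  ∑' q : GaussianInt,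
    ((Real.exp (-Real.pi * gN q / (2 * Q0)) : ℝ) : ℂ)
      * e (((j : ℂ) * (r1 : ℂ) * (q : ℂ) ^ 2 / (q1 : ℂ) ^ 2).re)

/-!
Dividing by `q₁²`, the pairs `(q₂, r₂)` counted by `K` satisfy `|r₁ q₂² / q₁² - r₂|² ≤ A` with
`A = 2 Q₀² / N`, and `N(q₂) ≤ Q₀`. So `exp(2π)` times the Gaussian weight
`exp(-π N(q₂) / (2 Q₀)) exp(-π |r₁ q₂² / q₁² - r₂|² / A)` is at least `1` on each of them, and the
count is at most `exp(2π)` times the sum of this weight over all `(q₂, r₂) ∈ ℤ[i]²`. Poisson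
summation in `r₂` turns that sum into `A ∑_j exp(-π A N(j)) S(q₁, r₁, j)`. The frequency `j = 0`
gives `A · O(Q₀) = O(Q₀³ / N)`, the others the exponential sums of the statement.
-/

open Real

section IntegerGaussian

lemma norm_e (t : ℝ) : ‖e t‖ = 1 := by
  have h : (2 * π * Complex.I * t : ℂ) = ((2 * π * t : ℝ) : ℂ) * Complex.I := by push_cast; ring
  rw [e, h, Complex.norm_exp_ofReal_mul_I]

lemma e_add (s t : ℝ) : e (s + t) = e s * e t := by
  rw [e, e, e, ← Complex.exp_add]
  push_cast
  ring_nf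

lemma norm_ofReal_mul_e {x : ℝ} (hx : 0 ≤ x) (t : ℝ) : ‖(x : ℂ) * e t‖ = x := by
  rw [norm_mul, norm_e, mul_one, Complex.norm_of_nonneg hx]

lemma summable_exp_neg_mul_int_sub_sq {c : ℝ} (hc : 0 < c) (x : ℝ) :
    Summable fun n : ℤ ↦ exp (-c * ((n : ℝ) - x) ^ 2) := by
  have him (t : ℝ) : (Complex.I * t).im = t := by simp
  have h := ((summable_jacobiTheta₂_term_iff (-(Complex.I * (c * x / π : ℝ)))
    (Complex.I * (c / π : ℝ))).2 (by rw [him]; positivity)).norm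
  refine (h.mul_left (exp (-c * x ^ 2))).congr fun n ↦ ?_
  rw [norm_jacobiTheta₂_term, ← exp_add, Complex.neg_im, him, him]
  congr 1
  field_simp
  ring

lemma tsum_exp_neg_int_sub_sq {A : ℝ} (hA : 0 < A) (x : ℝ) :
    ((∑' n : ℤ, exp (-(π / A) * ((n : ℝ) - x) ^ 2) : ℝ) : ℂ)
      = √A * ∑' n : ℤ, (exp (-(π * A) * (n : ℝ) ^ 2) : ℂ) * e (n * x) := by
  have h := Complex.tsum_exp_neg_quadratic (a := (A : ℂ)) (by simpa using hA) (Complex.I * x)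
  have hleft : ((∑' n : ℤ, exp (-(π / A) * ((n : ℝ) - x) ^ 2) : ℝ) : ℂ)
      = ∑' n : ℤ, Complex.exp (-π / A * (n + Complex.I * (Complex.I * x)) ^ 2) := by
    rw [Complex.ofReal_tsum]
    refine tsum_congr fun n ↦ ?_
    rw [← mul_assoc, Complex.I_mul_I]
    push_cast
    ring_nf
  have hright : ∑' n : ℤ, (exp (-(π * A) * (n : ℝ) ^ 2) : ℂ) * e (n * x)
      = ∑' n : ℤ, Complex.exp (-π * A * n ^ 2 + 2 * π * (Complex.I * x) * n) := by
    refine tsum_congr fun n ↦ ?_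
    rw [e, Complex.exp_add]
    push_cast
    ring_nf
  have hsqrt : (A : ℂ) ^ (1 / 2 : ℂ) = √A := by
    rw [sqrt_eq_rpow, Complex.ofReal_cpow hA.le]
    norm_num
  have hsqrt_ne : (√A : ℂ) ≠ 0 := mod_cast (sqrt_pos.2 hA).ne'
  rw [hleft, hright, h, hsqrt, ← mul_assoc (√A : ℂ), mul_one_div_cancel hsqrt_ne, one_mul]

end IntegerGaussian

section GaussianIntegerGaussian

lemma gN_eq_normSq (z : GaussianInt) : gN z = Complex.normSq z := by
  simp only [gN, Complex.normSq_apply, GaussianInt.intCast_re, GaussianInt.intCast_im, sq]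

lemma gN_nonneg (z : GaussianInt) : 0 ≤ gN z := by
  rw [gN]
  positivity

lemma gN_zero : gN 0 = 0 := by simp [gN]

/-- The coordinates of a Gaussian integer, used to reduce sums over `ℤ[i]` to sums over `ℤ`. -/
def reImEquiv : GaussianInt ≃ ℤ × ℤ where
  toFun z := (z.re, z.im)
  invFun p := ⟨p.1, p.2⟩
  left_inv _ := rfl
  right_inv _ := rfl

section Product

variable {R : Type*} [NormedRing R] [CompleteSpace R] {f g : ℤ → R}

lemma summable_re_mul_im (hf : Summable fun n ↦ ‖f n‖) (hg : Summable fun n ↦ ‖g n‖) :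
    Summable fun z : GaussianInt ↦ f z.re * g z.im :=
  reImEquiv.summable_iff (f := fun p : ℤ × ℤ ↦ f p.1 * g p.2) |>.2
    (summable_mul_of_summable_norm hf hg)

lemma tsum_re_mul_im (hf : Summable fun n ↦ ‖f n‖) (hg : Summable fun n ↦ ‖g n‖) :
    ∑' z : GaussianInt, f z.re * g z.im = (∑' n, f n) * ∑' n, g n := by
  rw [tsum_mul_tsum_of_summable_norm hf hg, ← reImEquiv.tsum_eq]
  rfl

end Product

lemma exp_neg_mul_normSq_sub (c : ℝ) (α : ℂ) (z : GaussianInt) :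
    exp (-c * Complex.normSq (α - z))
      = exp (-c * ((z.re : ℝ) - α.re) ^ 2) * exp (-c * ((z.im : ℝ) - α.im) ^ 2) := by
  rw [← exp_add, Complex.normSq_apply, Complex.sub_re, Complex.sub_im, GaussianInt.intCast_re,
    GaussianInt.intCast_im]
  ring_nf

lemma summable_exp_neg_mul_normSq_sub {c : ℝ} (hc : 0 < c) (α : ℂ) :
    Summable fun z : GaussianInt ↦ exp (-c * Complex.normSq (α - z)) := by
  simp only [exp_neg_mul_normSq_sub]
  exact summable_re_mul_im (summable_exp_neg_mul_int_sub_sq hc α.re).norm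
    (summable_exp_neg_mul_int_sub_sq hc α.im).norm

lemma gN_eq_normSq_zero_sub (z : GaussianInt) : gN z = Complex.normSq (0 - z) := by
  rw [zero_sub, Complex.normSq_neg, gN_eq_normSq]

lemma summable_exp_neg_mul_gN {c : ℝ} (hc : 0 < c) :
    Summable fun z : GaussianInt ↦ exp (-c * gN z) := by
  simpa only [gN_eq_normSq_zero_sub] using summable_exp_neg_mul_normSq_sub hc 0

lemma tsum_exp_neg_normSq_sub {A : ℝ} (hA : 0 < A) (α : ℂ) :
    ((∑' z : GaussianInt, exp (-(π / A) * Complex.normSq (α - z)) : ℝ) : ℂ)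
      = A * ∑' j : GaussianInt, (exp (-(π * A) * gN j) : ℂ) * e ((j : ℂ) * α).re := by
  have hleft (x : ℝ) := (summable_exp_neg_mul_int_sub_sq (div_pos pi_pos hA) x).norm
  have hright (x : ℝ) :
      Summable fun n : ℤ ↦ ‖(exp (-(π * A) * (n : ℝ) ^ 2) : ℂ) * e (n * x)‖ := by
    simpa only [norm_ofReal_mul_e (exp_pos _).le, sub_zero] using
      summable_exp_neg_mul_int_sub_sq (mul_pos pi_pos hA) 0
  have hterm (j : GaussianInt) : (exp (-(π * A) * gN j) : ℂ) * e ((j : ℂ) * α).re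
      = (exp (-(π * A) * (j.re : ℝ) ^ 2) * e (j.re * α.re))
        * (exp (-(π * A) * (j.im : ℝ) ^ 2) * e (j.im * -α.im)) := by
    rw [mul_mul_mul_comm, ← Complex.ofReal_mul, ← exp_add, ← e_add, gN, Complex.mul_re,
      GaussianInt.intCast_re, GaussianInt.intCast_im]
    ring_nf
  have hreflect : ∑' n : ℤ, (exp (-(π * A) * (n : ℝ) ^ 2) : ℂ) * e (n * α.im)
      = ∑' n : ℤ, (exp (-(π * A) * (n : ℝ) ^ 2) : ℂ) * e (n * -α.im) := by
    rw [← (Equiv.neg ℤ).tsum_eq]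
    simp
  simp only [exp_neg_mul_normSq_sub, hterm]
  rw [tsum_re_mul_im (hleft _) (hleft _), tsum_re_mul_im (hright _) (hright _),
    Complex.ofReal_mul, tsum_exp_neg_int_sub_sq hA, tsum_exp_neg_int_sub_sq hA, mul_mul_mul_comm,
    ← Complex.ofReal_mul, mul_self_sqrt hA.le, hreflect]

lemma tsum_exp_neg_normSq_sub_le {A : ℝ} (hA : 0 < A) (α : ℂ) :
    ∑' z : GaussianInt, exp (-(π / A) * Complex.normSq (α - z))
      ≤ A * ∑' j : GaussianInt, exp (-(π * A) * gN j) := by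
  have hnonneg : 0 ≤ ∑' z : GaussianInt, exp (-(π / A) * Complex.normSq (α - z)) :=
    tsum_nonneg fun _ ↦ (exp_pos _).le
  rw [← Complex.norm_of_nonneg hnonneg, tsum_exp_neg_normSq_sub hA, norm_mul,
    Complex.norm_of_nonneg hA.le]
  gcongr
  exact tsum_of_norm_bounded (summable_exp_neg_mul_gN (mul_pos pi_pos hA)).hasSum
    fun j ↦ (norm_ofReal_mul_e (exp_pos _).le _).le

/-- The theta constant `∑_{z ∈ ℤ[i]} exp(-π N(z))`, which enters the absolute constant of the
theorem. -/
def gaussianTheta : ℝ := ∑' z : GaussianInt, exp (-π * gN z)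

lemma gaussianTheta_nonneg : 0 ≤ gaussianTheta := tsum_nonneg fun _ ↦ (exp_pos _).le

lemma tsum_exp_neg_gN_le {A : ℝ} (hA : 1 ≤ A) :
    ∑' z : GaussianInt, exp (-(π / A) * gN z) ≤ A * gaussianTheta := by
  have hA0 : 0 < A := one_pos.trans_le hA
  calc ∑' z : GaussianInt, exp (-(π / A) * gN z)
      ≤ A * ∑' j : GaussianInt, exp (-(π * A) * gN j) := by
        simpa only [gN_eq_normSq_zero_sub] using tsum_exp_neg_normSq_sub_le hA0 0
    _ ≤ A * gaussianTheta := by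
        refine mul_le_mul_of_nonneg_left (Summable.tsum_le_tsum (fun j ↦ ?_)
          (summable_exp_neg_mul_gN (mul_pos pi_pos hA0)) (summable_exp_neg_mul_gN pi_pos)) hA0.le
        gcongr
        · exact gN_nonneg j
        · exact le_mul_of_one_le_right pi_pos.le hA

end GaussianIntegerGaussian

section WeightedPoisson

variable {ι : Type*} {w : ι → ℝ} {A : ℝ}

lemma norm_tsum_mul_e_le (hw : Summable w) (hw0 : ∀ i, 0 ≤ w i) (θ : ι → ℝ) :
    ‖∑' i, (w i : ℂ) * e (θ i)‖ ≤ ∑' i, w i :=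
  tsum_of_norm_bounded hw.hasSum fun i ↦ (norm_ofReal_mul_e (hw0 i) _).le

lemma summable_mul_exp_neg_normSq_sub (hw : Summable w) (hw0 : ∀ i, 0 ≤ w i) (hA : 0 < A)
    (α : ι → ℂ) : Summable fun p : ι × GaussianInt ↦
      w p.1 * exp (-(π / A) * Complex.normSq (α p.1 - p.2)) := by
  refine (summable_prod_of_nonneg fun p ↦ mul_nonneg (hw0 p.1) (exp_pos _).le).2 ⟨fun i ↦
    (summable_exp_neg_mul_normSq_sub (div_pos pi_pos hA) (α i)).mul_left (w i), ?_⟩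
  refine .of_nonneg_of_le (fun i ↦ tsum_nonneg fun z ↦ mul_nonneg (hw0 i) (exp_pos _).le)
    (fun i ↦ ?_) (hw.mul_right (A * ∑' j : GaussianInt, exp (-(π * A) * gN j)))
  simp only [tsum_mul_left]
  exact mul_le_mul_of_nonneg_left (tsum_exp_neg_normSq_sub_le hA (α i)) (hw0 i)

lemma tsum_mul_exp_neg_normSq_sub (hw : Summable w) (hw0 : ∀ i, 0 ≤ w i) (hA : 0 < A)
    (α : ι → ℂ) :
    ((∑' p : ι × GaussianInt, w p.1 * exp (-(π / A) * Complex.normSq (α p.1 - p.2)) : ℝ) : ℂ)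
      = A * ∑' j : GaussianInt,
        (exp (-(π * A) * gN j) : ℂ) * ∑' i, (w i : ℂ) * e ((j : ℂ) * α i).re := by
  have hdual : Summable (Function.uncurry fun (i : ι) (j : GaussianInt) ↦
      (w i : ℂ) * ((exp (-(π * A) * gN j) : ℂ) * e ((j : ℂ) * α i).re)) := by
    refine .of_norm_bounded (hw.mul_of_nonneg (summable_exp_neg_mul_gN (mul_pos pi_pos hA)) hw0
      fun _ ↦ (exp_pos _).le) fun p ↦ ?_
    rw [Function.uncurry, norm_mul, Complex.norm_of_nonneg (hw0 p.1),
      norm_ofReal_mul_e (exp_pos _).le]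
  calc ((∑' p : ι × GaussianInt, w p.1 * exp (-(π / A) * Complex.normSq (α p.1 - p.2)) : ℝ) : ℂ)
      = ∑' i, (w i : ℂ) * (∑' z : GaussianInt, exp (-(π / A) * Complex.normSq (α i - z)) : ℝ) := by
        rw [(summable_mul_exp_neg_normSq_sub hw hw0 hA α).tsum_prod, Complex.ofReal_tsum]
        simp only [tsum_mul_left, Complex.ofReal_mul]
    _ = A * ∑' i, ∑' j : GaussianInt,
          (w i : ℂ) * ((exp (-(π * A) * gN j) : ℂ) * e ((j : ℂ) * α i).re) := by
        simp only [tsum_exp_neg_normSq_sub hA, mul_left_comm _ (A : ℂ), tsum_mul_left]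
    _ = A * ∑' j : GaussianInt, ∑' i,
          (w i : ℂ) * ((exp (-(π * A) * gN j) : ℂ) * e ((j : ℂ) * α i).re) := by
        rw [hdual.tsum_comm]
    _ = _ := by
        simp only [mul_left_comm (w _ : ℂ), tsum_mul_left]

lemma tsum_mul_exp_neg_normSq_sub_le (hw : Summable w) (hw0 : ∀ i, 0 ≤ w i) (hA : 0 < A)
    (α : ι → ℂ) :
    ∑' p : ι × GaussianInt, w p.1 * exp (-(π / A) * Complex.normSq (α p.1 - p.2))
      ≤ A * ∑' j : GaussianInt,
        exp (-(π * A) * gN j) * ‖∑' i, (w i : ℂ) * e ((j : ℂ) * α i).re‖ := by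
  have hsummable : Summable fun j : GaussianInt ↦
      exp (-(π * A) * gN j) * ‖∑' i, (w i : ℂ) * e ((j : ℂ) * α i).re‖ :=
    .of_nonneg_of_le (fun j ↦ by positivity) (fun j ↦ mul_le_mul_of_nonneg_left
      (norm_tsum_mul_e_le hw hw0 _) (exp_pos _).le)
      ((summable_exp_neg_mul_gN (mul_pos pi_pos hA)).mul_right (∑' i, w i))
  have hnonneg : 0 ≤ ∑' p : ι × GaussianInt,
      w p.1 * exp (-(π / A) * Complex.normSq (α p.1 - p.2)) :=
    tsum_nonneg fun p ↦ mul_nonneg (hw0 p.1) (exp_pos _).le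
  rw [← Complex.norm_of_nonneg hnonneg, tsum_mul_exp_neg_normSq_sub hw hw0 hA, norm_mul,
    Complex.norm_of_nonneg hA.le]
  gcongr
  refine tsum_of_norm_bounded hsummable.hasSum fun j ↦ ?_
  rw [norm_mul, Complex.norm_of_nonneg (exp_pos _).le]

end WeightedPoisson

section QuadraticGaussSums

lemma summable_exp_neg_pi_mul_gN_div {Q0 : ℝ} (hQ : 0 < Q0) :
    Summable fun q : GaussianInt ↦ exp (-π * gN q / (2 * Q0)) := by
  refine (summable_exp_neg_mul_gN (c := π / (2 * Q0)) (by positivity)).congr fun q ↦ ?_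
  ring_nf

lemma Ssum_eq_tsum (Q0 : ℝ) (q1 r1 j : GaussianInt) :
    Ssum Q0 q1 r1 j = ∑' q : GaussianInt, (exp (-π * gN q / (2 * Q0)) : ℂ)
      * e ((j : ℂ) * ((r1 : ℂ) * (q : ℂ) ^ 2 / (q1 : ℂ) ^ 2)).re := by
  simp only [Ssum, mul_div_assoc, mul_assoc]

lemma norm_Ssum_le {Q0 : ℝ} (hQ : 1 ≤ 2 * Q0) (q1 r1 j : GaussianInt) :
    ‖Ssum Q0 q1 r1 j‖ ≤ 2 * Q0 * gaussianTheta :=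
  calc ‖Ssum Q0 q1 r1 j‖
      ≤ ∑' q : GaussianInt, exp (-π * gN q / (2 * Q0)) :=
        norm_tsum_mul_e_le (summable_exp_neg_pi_mul_gN_div (by linarith)) (fun _ ↦ (exp_pos _).le) _
    _ = ∑' q : GaussianInt, exp (-(π / (2 * Q0)) * gN q) := tsum_congr fun q ↦ by ring_nf
    _ ≤ 2 * Q0 * gaussianTheta := tsum_exp_neg_gN_le hQ

/-- The sum `∑_{j ≠ 0} exp(-2π N(j) Q₀² / N) |S(q₁, r₁, j)|` over the nonzero frequencies. -/
def nonzeroFreqSum (N Q0 : ℝ) (q1 r1 : GaussianInt) : ℝ :=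
  ∑' j : {j : GaussianInt // j ≠ 0},
    exp (-(2 * π) * gN (j : GaussianInt) * Q0 ^ 2 / N) * ‖Ssum Q0 q1 r1 (j : GaussianInt)‖

lemma nonzeroFreqSum_nonneg (N Q0 : ℝ) (q1 r1 : GaussianInt) : 0 ≤ nonzeroFreqSum N Q0 q1 r1 :=
  tsum_nonneg fun _ ↦ by positivity

variable {N Q0 : ℝ}

lemma summable_exp_neg_two_pi_mul_gN (hN : 0 < N) (hQ : 0 < Q0) :
    Summable fun j : GaussianInt ↦ exp (-(2 * π) * gN j * Q0 ^ 2 / N) := by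
  refine (summable_exp_neg_mul_gN (c := 2 * π * Q0 ^ 2 / N) (by positivity)).congr fun j ↦ ?_
  ring_nf

lemma summable_exp_mul_norm_Ssum (hN : 0 < N) (hQ : 1 ≤ 2 * Q0) (q1 r1 : GaussianInt) :
    Summable fun j : GaussianInt ↦
      exp (-(2 * π) * gN j * Q0 ^ 2 / N) * ‖Ssum Q0 q1 r1 j‖ :=
  .of_nonneg_of_le (fun _ ↦ by positivity)
    (fun j ↦ mul_le_mul_of_nonneg_left (norm_Ssum_le hQ q1 r1 j) (exp_pos _).le)
    ((summable_exp_neg_two_pi_mul_gN hN (by linarith)).mul_right _)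

lemma tsum_exp_mul_norm_Ssum (hN : 0 < N) (hQ : 1 ≤ 2 * Q0) (q1 r1 : GaussianInt) :
    ∑' j : GaussianInt, exp (-(2 * π) * gN j * Q0 ^ 2 / N) * ‖Ssum Q0 q1 r1 j‖
      = ‖Ssum Q0 q1 r1 0‖ + nonzeroFreqSum N Q0 q1 r1 := by
  rw [← (summable_exp_mul_norm_Ssum hN hQ q1 r1).tsum_subtype_add_tsum_subtype_compl {0},
    tsum_singleton (0 : GaussianInt)
      fun j ↦ exp (-(2 * π) * gN j * Q0 ^ 2 / N) * ‖Ssum Q0 q1 r1 j‖]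
  simp only [gN_zero, mul_zero, zero_mul, zero_div, exp_zero, one_mul]
  rfl

lemma bddAbove_range_nonzeroFreqSum (hN : 0 < N) (hQ : 1 ≤ 2 * Q0) :
    BddAbove (Set.range fun p : GaussianInt × GaussianInt ↦ nonzeroFreqSum N Q0 p.1 p.2) := by
  refine ⟨∑' j : GaussianInt,
    exp (-(2 * π) * gN j * Q0 ^ 2 / N) * (2 * Q0 * gaussianTheta), ?_⟩
  rintro _ ⟨⟨q1, r1⟩, rfl⟩
  have hsum := summable_exp_mul_norm_Ssum hN hQ q1 r1
  calc nonzeroFreqSum N Q0 q1 r1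
      ≤ ∑' j : GaussianInt, exp (-(2 * π) * gN j * Q0 ^ 2 / N) * ‖Ssum Q0 q1 r1 j‖ :=
        hsum.tsum_subtype_le _ {j | j ≠ 0} fun _ ↦ by positivity
    _ ≤ _ := hsum.tsum_le_tsum
        (fun j ↦ mul_le_mul_of_nonneg_left (norm_Ssum_le hQ q1 r1 j) (exp_pos _).le)
        ((summable_exp_neg_two_pi_mul_gN hN (by linarith)).mul_right _)

end QuadraticGaussSums

section Counting

/-- The Gaussian weight whose sum over all `(q₂, r₂) = p` majorizes, up to a factor `exp(2π)`, the
number of fractions `r₂ / q₂²` near `r₁ / q₁²`; its width in `r₂` is `√(2 Q₀² / N)`. -/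
def nearbyWeight (N Q0 : ℝ) (q1 r1 : GaussianInt) (p : GaussianInt × GaussianInt) : ℝ :=
  exp (-π * gN p.1 / (2 * Q0)) * exp (-(π / (2 * Q0 ^ 2 / N)) *
    Complex.normSq ((r1 : ℂ) * (p.1 : ℂ) ^ 2 / (q1 : ℂ) ^ 2 - p.2))

/-- The number of pairs `(q₂, r₂)` with `Q₀ / √2 < N(q₂) ≤ Q₀` for which `r₂ / q₂²` is within
`√(2 / N)` of `r₁ / q₁²`, in denominator-free form. The numerators `r₂` admitted for the modulus
`q₂` are the values of `rep q₂`. -/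
def nearbyFractionCount (N Q0 : ℝ) {ι : GaussianInt → Type*} (rep : ∀ q, ι q → GaussianInt)
    (q1 r1 : GaussianInt) : ℕ :=
  Nat.card {p : Σ q2, ι q2 // Q0 / √2 < gN p.1 ∧ gN p.1 ≤ Q0 ∧
    gN (r1 * p.1 ^ 2 - rep p.1 p.2 * q1 ^ 2) ≤ 2 * N⁻¹ * gN q1 ^ 2 * gN p.1 ^ 2}

/-- The comparison makes `1` summable over `ι`, so `ι` is finite and `Nat.card ι` is not junk. -/
lemma natCard_le_tsum {ι κ : Type*} {F : κ → ℝ} (hF : Summable F) (hF0 : ∀ k, 0 ≤ F k)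
    {f : ι → κ} (hf : f.Injective) (hone : ∀ i, 1 ≤ F (f i)) : (Nat.card ι : ℝ) ≤ ∑' k, F k := by
  have hsummable : Summable fun _ : ι ↦ (1 : ℝ) :=
    .of_nonneg_of_le (fun _ ↦ zero_le_one) hone (hF.comp_injective hf)
  calc (Nat.card ι : ℝ) = ∑' _ : ι, (1 : ℝ) := by rw [tsum_const, nsmul_one]
    _ ≤ ∑' k, F k := hsummable.tsum_le_tsum_of_inj f hf (fun k _ ↦ hF0 k) hone hF

variable {N Q0 : ℝ} {q1 : GaussianInt}

lemma nearbyWeight_nonneg (N Q0 : ℝ) (q1 r1 : GaussianInt) (p : GaussianInt × GaussianInt) :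
    0 ≤ nearbyWeight N Q0 q1 r1 p := by
  rw [nearbyWeight]
  positivity

lemma summable_nearbyWeight (hN : 0 < N) (hQ : 0 < Q0) (q1 r1 : GaussianInt) :
    Summable (nearbyWeight N Q0 q1 r1) :=
  summable_mul_exp_neg_normSq_sub (summable_exp_neg_pi_mul_gN_div hQ) (fun _ ↦ (exp_pos _).le)
    (by positivity) fun q ↦ (r1 : ℂ) * (q : ℂ) ^ 2 / (q1 : ℂ) ^ 2

lemma tsum_nearbyWeight_le (hN : 0 < N) (hQ : 1 ≤ 2 * Q0) (q1 r1 : GaussianInt) :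
    ∑' p, nearbyWeight N Q0 q1 r1 p
      ≤ 2 * Q0 ^ 2 / N * (2 * Q0 * gaussianTheta + nonzeroFreqSum N Q0 q1 r1) := by
  have hQ0 : 0 < Q0 := by linarith
  have hA : 0 < 2 * Q0 ^ 2 / N := by positivity
  have hexp (j : GaussianInt) :
      -(π * (2 * Q0 ^ 2 / N)) * gN j = -(2 * π) * gN j * Q0 ^ 2 / N := by ring
  calc ∑' p, nearbyWeight N Q0 q1 r1 p
      ≤ 2 * Q0 ^ 2 / N * ∑' j : GaussianInt,
          exp (-(2 * π) * gN j * Q0 ^ 2 / N) * ‖Ssum Q0 q1 r1 j‖ := by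
        simp only [Ssum_eq_tsum, ← hexp]
        exact tsum_mul_exp_neg_normSq_sub_le (summable_exp_neg_pi_mul_gN_div hQ0)
          (fun _ ↦ (exp_pos _).le) hA fun q ↦ (r1 : ℂ) * (q : ℂ) ^ 2 / (q1 : ℂ) ^ 2
    _ ≤ _ := by
        rw [tsum_exp_mul_norm_Ssum hN hQ]
        gcongr
        exact norm_Ssum_le hQ q1 r1 0

lemma normSq_div_sub_eq (hq1 : q1 ≠ 0) (r1 q r : GaussianInt) :
    Complex.normSq ((r1 : ℂ) * (q : ℂ) ^ 2 / (q1 : ℂ) ^ 2 - r)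
      = gN (r1 * q ^ 2 - r * q1 ^ 2) / gN q1 ^ 2 := by
  have hq1' : (q1 : ℂ) ≠ 0 := GaussianInt.toComplex_eq_zero.not.2 hq1
  rw [gN_eq_normSq, gN_eq_normSq, ← map_pow Complex.normSq, ← Complex.normSq_div]
  congr 1
  simp only [map_sub, map_mul, map_pow]
  field_simp

lemma one_le_exp_mul_nearbyWeight (hN : 0 < N) (hQ : 0 < Q0) (hq1 : q1 ≠ 0)
    {r1 q r : GaussianInt} (hq : gN q ≤ Q0)
    (hnear : gN (r1 * q ^ 2 - r * q1 ^ 2) ≤ 2 * N⁻¹ * gN q1 ^ 2 * gN q ^ 2) :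
    1 ≤ exp (2 * π) * nearbyWeight N Q0 q1 r1 (q, r) := by
  have hgq1 : 0 < gN q1 := by
    rw [gN_eq_normSq]
    exact Complex.normSq_pos.2 (GaussianInt.toComplex_eq_zero.not.2 hq1)
  have hdist : gN (r1 * q ^ 2 - r * q1 ^ 2) / gN q1 ^ 2 ≤ 2 * Q0 ^ 2 / N := by
    rw [div_le_iff₀ (by positivity)]
    calc gN (r1 * q ^ 2 - r * q1 ^ 2) ≤ 2 * N⁻¹ * gN q1 ^ 2 * gN q ^ 2 := hnear
      _ ≤ 2 * N⁻¹ * gN q1 ^ 2 * Q0 ^ 2 := by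
        gcongr
        exact gN_nonneg q
      _ = 2 * Q0 ^ 2 / N * gN q1 ^ 2 := by ring
  have hnumerator : π / (2 * Q0 ^ 2 / N) * (gN (r1 * q ^ 2 - r * q1 ^ 2) / gN q1 ^ 2) ≤ π := by
    rw [div_mul_eq_mul_div, div_le_iff₀ (by positivity)]
    gcongr
  have hmodulus : π * gN q / (2 * Q0) ≤ π := by
    rw [div_le_iff₀ (by positivity)]
    gcongr
    linarith
  rw [nearbyWeight, normSq_div_sub_eq hq1, ← exp_add, ← exp_add]
  refine one_le_exp ?_
  rw [neg_mul, neg_mul, neg_div]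
  linarith

lemma nearbyFractionCount_le (hN : 0 < N) (hQ : 1 ≤ 2 * Q0) {ι : GaussianInt → Type*}
    {rep : ∀ q, ι q → GaussianInt} (hrep : ∀ q, (rep q).Injective) (hq1 : q1 ≠ 0)
    (r1 : GaussianInt) :
    (nearbyFractionCount N Q0 rep q1 r1 : ℝ) ≤ exp (2 * π) *
      (2 * Q0 ^ 2 / N * (2 * Q0 * gaussianTheta + nonzeroFreqSum N Q0 q1 r1)) := by
  have hQ0 : 0 < Q0 := by linarith
  have hpair : (fun p : Σ q, ι q ↦ (p.1, rep p.1 p.2)).Injective := by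
    rintro ⟨q, i⟩ ⟨q', i'⟩ h
    obtain ⟨rfl, hi⟩ := Prod.mk.inj h
    obtain rfl : i = i' := hrep q hi
    rfl
  calc (nearbyFractionCount N Q0 rep q1 r1 : ℝ)
      ≤ ∑' p, exp (2 * π) * nearbyWeight N Q0 q1 r1 p :=
        natCard_le_tsum ((summable_nearbyWeight hN hQ0 q1 r1).mul_left _)
          (fun p ↦ mul_nonneg (exp_pos _).le (nearbyWeight_nonneg N Q0 q1 r1 p))
          (hpair.comp Subtype.val_injective)
          fun p ↦ one_le_exp_mul_nearbyWeight hN hQ0 hq1 p.2.2.1 p.2.2.2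
    _ ≤ _ := by
        rw [tsum_mul_left]
        gcongr
        exact tsum_nearbyWeight_le hN hQ q1 r1

end Counting

lemma natCast_sSup_le {s : Set ℕ} {b : ℝ} (hb : 0 ≤ b) (h : ∀ m ∈ s, (m : ℝ) ≤ b) :
    ((sSup s : ℕ) : ℝ) ≤ b :=
  (Nat.le_floor_iff hb).1 (csSup_le' fun m hm ↦ Nat.le_floor (h m hm))

theorem counting_square_moduli_reduction_general :
    ∃ C : ℝ, 0 < C ∧ ∀ N Q0 : ℝ, 0 < N → 1 ≤ Q0 →
      ∀ (ι : GaussianInt → Type*) (rep : ∀ q, ι q → GaussianInt), (∀ q, (rep q).Injective) →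
      ((sSup {m : ℕ | ∃ q1, (Q0 / √2 < gN q1 ∧ gN q1 ≤ Q0) ∧
          ∃ i1 : ι q1, m = nearbyFractionCount N Q0 rep q1 (rep q1 i1)} : ℕ) : ℝ)
        ≤ C * (Q0 ^ 3 / N + Q0 ^ 2 / N *
          sSup {v : ℝ | ∃ q1, (Q0 / √2 < gN q1 ∧ gN q1 ≤ Q0) ∧
            ∃ i1 : ι q1, v = nonzeroFreqSum N Q0 q1 (rep q1 i1)}) := by
  have hθ := gaussianTheta_nonneg
  refine ⟨exp (2 * π) * (4 * gaussianTheta + 2), by positivity, fun N Q0 hN hQ ι rep hrep ↦ ?_⟩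
  set V := {v : ℝ | ∃ q1, (Q0 / √2 < gN q1 ∧ gN q1 ≤ Q0) ∧
    ∃ i1 : ι q1, v = nonzeroFreqSum N Q0 q1 (rep q1 i1)}
  have hQ' : 1 ≤ 2 * Q0 := by linarith
  have hV0 : 0 ≤ sSup V := by
    refine sSup_nonneg ?_
    rintro _ ⟨q1, -, i1, rfl⟩
    exact nonzeroFreqSum_nonneg N Q0 q1 (rep q1 i1)
  have hV : BddAbove V := by
    refine (bddAbove_range_nonzeroFreqSum hN hQ').mono ?_
    rintro _ ⟨q1, -, i1, rfl⟩
    exact ⟨(q1, rep q1 i1), rfl⟩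
  refine natCast_sSup_le (by positivity) ?_
  rintro _ ⟨q1, hq1, i1, rfl⟩
  have hq1_ne : q1 ≠ 0 := by
    rintro rfl
    exact (div_nonneg (by linarith) (sqrt_nonneg 2)).not_gt (gN_zero ▸ hq1.1)
  have hle : nonzeroFreqSum N Q0 q1 (rep q1 i1) ≤ sSup V := le_csSup hV ⟨q1, hq1, i1, rfl⟩
  calc (nearbyFractionCount N Q0 rep q1 (rep q1 i1) : ℝ)
      ≤ exp (2 * π) * (2 * Q0 ^ 2 / N * (2 * Q0 * gaussianTheta + sSup V)) :=
        (nearbyFractionCount_le hN hQ' hrep hq1_ne _).trans (by gcongr)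
    _ = exp (2 * π) * (4 * gaussianTheta * (Q0 ^ 3 / N) + 2 * (Q0 ^ 2 / N * sSup V)) := by ring
    _ ≤ exp (2 * π) * ((4 * gaussianTheta + 2) * (Q0 ^ 3 / N)
          + (4 * gaussianTheta + 2) * (Q0 ^ 2 / N * sSup V)) := by gcongr <;> linarith
    _ = _ := by ring

/-- **Reduction of the counting quantity for square moduli to exponential sums**
(inequality (17) of the paper). There is an absolute constant `C` such that for all
`N, Q₀ ≥ 1` and any fixed system `rep` of representatives of invertible residues mod `q²`:
`K ≤ C (Q₀³/N + (Q₀²/N) max_{q₁,r₁} ∑_{j ≠ 0} exp(-2π N(j) Q₀²/N) |S(q₁,r₁,j)|)`. -/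
theorem counting_square_moduli_reduction :
    ∃ C : ℝ, 0 < C ∧
      ∀ (N Q0 : ℝ), 1 ≤ N → 1 ≤ Q0 →
      ∀ rep : (q : GaussianInt) → (GaussianInt ⧸ Ideal.span {q ^ 2})ˣ → GaussianInt,
      (∀ (q : GaussianInt) (u : (GaussianInt ⧸ Ideal.span {q ^ 2})ˣ),
        Ideal.Quotient.mk (Ideal.span {q ^ 2}) (rep q u)
          = (u : GaussianInt ⧸ Ideal.span {q ^ 2})) →
      ∀ K : ℕ,
      K = sSup {m : ℕ | ∃ q1 : GaussianInt,
            (Q0 / Real.sqrt 2 < gN q1 ∧ gN q1 ≤ Q0) ∧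
            ∃ u1 : (GaussianInt ⧸ Ideal.span {q1 ^ 2})ˣ,
              m = Nat.card {p : Σ q2 : GaussianInt, (GaussianInt ⧸ Ideal.span {q2 ^ 2})ˣ //
                    Q0 / Real.sqrt 2 < gN p.1 ∧ gN p.1 ≤ Q0 ∧
                    gN (rep q1 u1 * p.1 ^ 2 - rep p.1 p.2 * q1 ^ 2)
                      ≤ 2 * N⁻¹ * (gN q1) ^ 2 * (gN p.1) ^ 2}} →
      (K : ℝ) ≤ C * (Q0 ^ 3 / N + (Q0 ^ 2 / N) *
        sSup {v : ℝ | ∃ q1 : GaussianInt,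
          (Q0 / Real.sqrt 2 < gN q1 ∧ gN q1 ≤ Q0) ∧
          ∃ u1 : (GaussianInt ⧸ Ideal.span {q1 ^ 2})ˣ,
            v = ∑' j : {j : GaussianInt // j ≠ 0},
              Real.exp (-(2 * Real.pi) * gN (j : GaussianInt) * Q0 ^ 2 / N)
                * ‖Ssum Q0 q1 (rep q1 u1) (j : GaussianInt)‖}) := by
  obtain ⟨C, hC, hle⟩ := counting_square_moduli_reduction_general
  refine ⟨C, hC, fun N Q0 hN hQ rep hrep K hK ↦ hK ▸ hle N Q0 (one_pos.trans_le hN) hQ _ rep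
    fun q u v huv ↦ Units.ext ?_⟩
  rw [← hrep q u, ← hrep q v, huv]
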